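/- Let d ∈ ℕ with d ≥ 1. Then for every k ≥ 19^(2d−1) + 1 and every step preserving continuous map F : S_{ℓ∞^k} → S_{ℓ1^k} such that F(1,…,1) ≠ F(−1,…,−1), one has ω_F(1/d) ≥ 1/2, i.e., there exist x, y ∈ S_{ℓ∞^k} with ‖x − y‖_∞ ≤ 1/d and ‖F(x) − F(y)‖_1 ≥ 1/2. -/

import Mathlib

/-- The sup norm (`ℓ∞` norm) on `ℝ^k`. -/
noncomputable def supNorm {k : ℕ} (x : Fin k → ℝ) : ℝ := ⨆ i, |x i|

/-- The `ℓ1` norm on `ℝ^k`. -/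
noncomputable def l1Norm {k : ℕ} (x : Fin k → ℝ) : ℝ := ∑ i, |x i|

theorem supNorm_eq_one {k : ℕ} {x : Fin k → ℝ} (hle : ∀ i, |x i| ≤ 1) (i₀ : Fin k)
    (hi₀ : |x i₀| = 1) : supNorm x = 1 := by
  refine le_antisymm (Real.iSup_le hle zero_le_one) ?_
  rw [← hi₀]
  exact le_ciSup (f := fun i => |x i|) (Set.finite_range _).bddAbove i₀

/-- If `g` and `h` are vectors of `ℓ1` norm one, `g` has mass at least `1/2` on `s`, and the mass of
`h` on `s` is at most a third of its mass off `s`, then their `ℓ1` distance is at least `1/2`. -/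
theorem half_le_l1Norm_sub {k : ℕ} {g h : Fin k → ℝ} (hg : l1Norm g = 1) (hh : l1Norm h = 1)
    (s : Finset (Fin k)) (hgs : 1 / 2 ≤ ∑ i ∈ s, |g i|)
    (hhs : 3 * ∑ i ∈ s, |h i| ≤ ∑ i ∈ sᶜ, |h i|) : 1 / 2 ≤ l1Norm (g - h) := by
  unfold l1Norm at *
  rw [← Finset.sum_add_sum_compl s] at hg hh ⊢
  have h₁ : ∑ i ∈ s, |g i| - ∑ i ∈ s, |h i| ≤ ∑ i ∈ s, |(g - h) i| := by
    rw [← Finset.sum_sub_distrib]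
    exact Finset.sum_le_sum fun i _ => abs_sub_abs_le_abs_sub _ _
  have h₂ : ∑ i ∈ sᶜ, |h i| - ∑ i ∈ sᶜ, |g i| ≤ ∑ i ∈ sᶜ, |(g - h) i| := by
    rw [← Finset.sum_sub_distrib]
    refine Finset.sum_le_sum fun i _ => ?_
    rw [Pi.sub_apply, abs_sub_comm]
    exact abs_sub_abs_le_abs_sub _ _
  linarith

/-- A partition of `Fin k` into `m + 1` nonempty blocks, each at least three times as large as the
previous one. -/
theorem exists_tripling_blocks {m k : ℕ} (hk : 3 ^ (m + 1) ≤ 2 * k + 1) :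
    ∃ β : Fin k → ℕ, (∀ i, β i ≤ m) ∧ (∃ i, β i = 0) ∧ (∃ i, β i = m) ∧
      ∀ j < m, 3 * (Finset.univ.filter (β · = j)).card ≤
        (Finset.univ.filter (β · = j + 1)).card := by
  have half : ∀ j : ℕ, ∃ q, 3 ^ j = 2 * q + 1 := fun j => (Odd.pow (by decide : Odd 3))
  choose q hq using half
  have hqs : ∀ j, q (j + 1) = 3 * q j + 1 := fun j => by
    have h₁ := hq j
    have h₂ := hq (j + 1)
    rw [pow_succ] at h₂
    omega
  have hmono : Monotone q := monotone_nat_of_le_succ fun j => by have := hqs j; omega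
  have hqk : q (m + 1) ≤ k := by have := hq (m + 1); omega
  let β : Fin k → ℕ := fun i => min m (Nat.log 3 (2 * i + 1))
  have hlog : ∀ (i : Fin k) (j : ℕ), j ≤ Nat.log 3 (2 * i + 1) ↔ q j ≤ i := fun i j => by
    rw [Nat.le_log_iff_pow_le (by norm_num) (by omega), hq]
    omega
  have hβ : ∀ (i : Fin k) (j : ℕ), q j ≤ i → (i : ℕ) < q (j + 1) → j ≤ m → β i = j := by
    intro i j h₁ h₂ h₃
    have h₄ := (hlog i j).2 h₁
    have h₅ := (hlog i (j + 1)).not.2 (by omega)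
    simp only [β]
    omega
  have hq0 : q 0 = 0 := by have := hq 0; simpa using this.symm
  have lower : ∀ j ≤ m, 3 ^ j ≤ (Finset.univ.filter (β · = j)).card := by
    intro j hj
    have hjk : q (j + 1) ≤ k := (hmono (by omega)).trans hqk
    have hcard : (Finset.Ico (q j) (q (j + 1))).card = 3 ^ j := by
      rw [Nat.card_Ico, hqs, hq]; omega
    rw [← hcard, ← Finset.card_map Fin.valEmbedding]
    refine Finset.card_le_card fun n hn => ?_
    rw [Finset.mem_Ico] at hn
    simp only [Finset.mem_map, Finset.mem_filter, Finset.mem_univ, true_and]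
    exact ⟨⟨n, by omega⟩, hβ _ j hn.1 hn.2 hj, rfl⟩
  have upper : ∀ j < m, (Finset.univ.filter (β · = j)).card ≤ 3 ^ j := by
    intro j hj
    have hcard : (Finset.Ico (q j) (q (j + 1))).card = 3 ^ j := by
      rw [Nat.card_Ico, hqs, hq]; omega
    rw [← hcard, ← Finset.card_map Fin.valEmbedding]
    refine Finset.card_le_card fun n hn => ?_
    simp only [Finset.mem_map, Finset.mem_filter, Finset.mem_univ, true_and] at hn
    obtain ⟨i, hi, rfl⟩ := hn
    have h₁ := hlog i j
    have h₂ := hlog i (j + 1)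
    simp only [β] at hi
    simp only [Fin.valEmbedding_apply, Finset.mem_Ico]
    omega
  have nonempty : ∀ j ≤ m, ∃ i, β i = j := fun j hj => by
    have : 0 < (Finset.univ.filter (β · = j)).card :=
      (by positivity : 0 < 3 ^ j).trans_le (lower j hj)
    obtain ⟨i, hi⟩ := Finset.card_pos.1 this
    exact ⟨i, (Finset.mem_filter.1 hi).2⟩
  refine ⟨β, fun i => min_le_left _ _, nonempty 0 (by omega), nonempty m le_rfl, fun j hj => ?_⟩
  calc 3 * (Finset.univ.filter (β · = j)).card ≤ 3 * 3 ^ j := Nat.mul_le_mul_left _ (upper j hj)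
    _ = 3 ^ (j + 1) := by ring
    _ ≤ _ := lower (j + 1) hj

/-- If each block with index in `J` is at most a third as large as the next block, and `g` is
constant on the union of the two, then the blocks with index in `J` carry at most a third of the
mass carried by the others. -/
theorem three_mul_sum_blocks_le {ι : Type*} [Fintype ι] [DecidableEq ι] (β : ι → ℕ) (J : Finset ℕ)
    (hJ : ∀ j ∈ J, j + 1 ∉ J) (g : ι → ℝ) (hg : ∀ i, 0 ≤ g i)
    (hcard : ∀ j ∈ J, 3 * (Finset.univ.filter (β · = j)).card ≤
      (Finset.univ.filter (β · = j + 1)).card)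
    (hconst : ∀ j ∈ J, ∀ i i', (β i = j ∨ β i = j + 1) → (β i' = j ∨ β i' = j + 1) → g i = g i') :
    3 * ∑ i ∈ Finset.univ.filter (β · ∈ J), g i ≤ ∑ i ∈ (Finset.univ.filter (β · ∈ J))ᶜ, g i := by
  have fiber : ∀ J' : Finset ℕ, ∑ i ∈ Finset.univ.filter (β · ∈ J'), g i =
      ∑ j ∈ J', ∑ i ∈ Finset.univ.filter (β · = j), g i := fun J' => by
    rw [Finset.sum_fiberwise_eq_sum_filter]
  have step : ∀ j ∈ J, 3 * ∑ i ∈ Finset.univ.filter (β · = j), g i ≤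
      ∑ i ∈ Finset.univ.filter (β · = j + 1), g i := by
    intro j hj
    rcases (Finset.univ.filter (β · = j)).eq_empty_or_nonempty with h | ⟨a, ha⟩
    · rw [h, Finset.sum_empty, mul_zero]
      exact Finset.sum_nonneg fun i _ => hg i
    · have ha : β a = j := (Finset.mem_filter.1 ha).2
      have h₁ : ∑ i ∈ Finset.univ.filter (β · = j), g i =
          (Finset.univ.filter (β · = j)).card * g a := by
        rw [Finset.sum_congr rfl fun i hi => hconst j hj i a
          (.inl (Finset.mem_filter.1 hi).2) (.inl ha), Finset.sum_const, nsmul_eq_mul]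
      have h₂ : ∑ i ∈ Finset.univ.filter (β · = j + 1), g i =
          (Finset.univ.filter (β · = j + 1)).card * g a := by
        rw [Finset.sum_congr rfl fun i hi => hconst j hj i a
          (.inr (Finset.mem_filter.1 hi).2) (.inl ha), Finset.sum_const, nsmul_eq_mul]
      rw [h₁, h₂, ← mul_assoc]
      exact mul_le_mul_of_nonneg_right (mod_cast hcard j hj) (hg a)
  calc 3 * ∑ i ∈ Finset.univ.filter (β · ∈ J), g i
      = ∑ j ∈ J, 3 * ∑ i ∈ Finset.univ.filter (β · = j), g i := by rw [fiber, Finset.mul_sum]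
    _ ≤ ∑ j ∈ J, ∑ i ∈ Finset.univ.filter (β · = j + 1), g i := Finset.sum_le_sum step
    _ = ∑ i ∈ Finset.univ.filter (β · ∈ J.image (· + 1)), g i := by
        rw [fiber, Finset.sum_image fun a _ b _ h => Nat.succ_injective h]
    _ ≤ _ := by
        refine Finset.sum_le_sum_of_subset_of_nonneg (fun i hi => ?_) fun i _ _ => hg i
        obtain ⟨j, hj, hji⟩ := Finset.mem_image.1 (Finset.mem_filter.1 hi).2
        simp only [Finset.mem_compl, Finset.mem_filter, Finset.mem_univ, true_and]
        exact fun h => hJ j hj (hji ▸ h)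

/-- Truncation of a real number to `[-1, 1]`. -/
noncomputable def clamp (a : ℝ) : ℝ := max (-1) (min 1 a)

theorem abs_clamp_le (a : ℝ) : |clamp a| ≤ 1 :=
  abs_le.2 ⟨le_max_left _ _, max_le (by norm_num) (min_le_left _ _)⟩

theorem clamp_of_one_le {a : ℝ} (h : 1 ≤ a) : clamp a = 1 := by
  rw [clamp, min_eq_left h]; norm_num

theorem clamp_of_le_neg_one {a : ℝ} (h : a ≤ -1) : clamp a = -1 := by
  rw [clamp, max_eq_left ((min_le_right _ _).trans h)]

theorem continuous_clamp : Continuous clamp :=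
  continuous_const.max (continuous_const.min continuous_id)

theorem abs_clamp_sub_clamp_le (a b : ℝ) : |clamp a - clamp b| ≤ |a - b| := by
  unfold clamp
  exact (abs_max_sub_max_le_max _ _ _ _).trans (max_le (by simp)
    ((abs_min_sub_min_le_max _ _ _ _).trans (max_le (by simp) le_rfl)))

/-- A descending staircase: at time `t` the coordinates of level `j` have the value `1 + j / d - t`,
truncated to `[-1, 1]`. -/
noncomputable def staircase {k : ℕ} (d : ℕ) (β : Fin k → ℕ) (t : ℝ) : Fin k → ℝ :=
  fun i => clamp (1 + β i / d - t)

theorem continuous_staircase {k : ℕ} (d : ℕ) (β : Fin k → ℕ) : Continuous (staircase d β) :=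
  continuous_pi fun _ => continuous_clamp.comp (by fun_prop)

theorem supNorm_staircase {k d : ℕ} (hd : 1 ≤ d) {β : Fin k → ℕ} (h₀ : ∃ i, β i = 0)
    (h₁ : ∃ i, β i = 2 * d) (t : ℝ) : supNorm (staircase d β t) = 1 := by
  have hd' : (d : ℝ) ≠ 0 := by positivity
  obtain ⟨a, ha⟩ := h₀
  obtain ⟨b, hb⟩ := h₁
  rcases le_total t 2 with ht | ht
  · refine supNorm_eq_one (fun i => abs_clamp_le _) b ?_
    have : ((2 * d : ℕ) : ℝ) / d = 2 := by push_cast; field_simp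
    rw [staircase, hb, this, clamp_of_one_le (by linarith), abs_one]
  · refine supNorm_eq_one (fun i => abs_clamp_le _) a ?_
    rw [staircase, ha, Nat.cast_zero, zero_div, clamp_of_le_neg_one (by linarith), abs_neg, abs_one]

theorem supNorm_staircase_sub_le {k d : ℕ} {β γ : Fin k → ℕ}
    (h : ∀ i, β i ≤ γ i + 1 ∧ γ i ≤ β i + 1) (t : ℝ) :
    supNorm (staircase d β t - staircase d γ t) ≤ 1 / (d : ℝ) := by
  refine Real.iSup_le (fun i => ?_) (by positivity)
  refine (abs_clamp_sub_clamp_le _ _).trans ?_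
  have : (1 + (β i : ℝ) / d - t) - (1 + γ i / d - t) = (β i - γ i) / d := by ring
  rw [this, abs_div, Nat.abs_cast]
  have h₁ : (β i : ℝ) ≤ γ i + 1 := mod_cast (h i).1
  have h₂ : (γ i : ℝ) ≤ β i + 1 := mod_cast (h i).2
  gcongr
  exact abs_le.2 ⟨by linarith, by linarith⟩

/-- Along the staircase, the coordinate of `F` at an index of the top level vanishes somewhere. -/
theorem exists_staircase_apply_eq_zero {d k : ℕ} (hd : 1 ≤ d) {β : Fin k → ℕ}
    (hβ : ∀ i, β i ≤ 2 * d) (h₀ : ∃ i, β i = 0) {b : Fin k} (hb : β b = 2 * d)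
    {F : (Fin k → ℝ) → (Fin k → ℝ)}
    (hFmaps : ∀ x, supNorm x = 1 → l1Norm (F x) = 1)
    (hFcont : ContinuousOn F {x | supNorm x = 1})
    (hstep : ∀ x, supNorm x = 1 → ∀ i j, x i = x j → F x i = F x j)
    (hne : F (fun _ => (1 : ℝ)) ≠ F (fun _ => (-1 : ℝ))) :
    ∃ t, F (staircase d β t) b = 0 := by
  have hd' : (0 : ℝ) < d := by positivity
  have start : staircase d β 0 = fun _ => 1 :=
    funext fun i => clamp_of_one_le (by have : 0 ≤ (β i : ℝ) / d := by positivity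
                                        linarith)
  have finish : staircase d β 4 = fun _ => -1 :=
    funext fun i => clamp_of_le_neg_one (by
      have : (β i : ℝ) / d ≤ 2 := by
        rw [div_le_iff₀ hd']
        exact_mod_cast hβ i
      linarith)
  have hnorm := supNorm_staircase hd h₀ ⟨b, hb⟩
  have hconst : ∀ c : ℝ, supNorm (fun _ : Fin k => c) = 1 →
      F (fun _ => c) = fun _ => F (fun _ => c) b := fun c hc => funext fun i => hstep _ hc i b rfl
  have habs : ∀ c : ℝ, supNorm (fun _ : Fin k => c) = 1 → k * |F (fun _ => c) b| = 1 := by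
    intro c hc
    have h := hFmaps _ hc
    rw [hconst c hc] at h
    simpa [l1Norm] using h
  have hs : supNorm (fun _ : Fin k => (1 : ℝ)) = 1 := start ▸ hnorm 0
  have hf : supNorm (fun _ : Fin k => (-1 : ℝ)) = 1 := finish ▸ hnorm 4
  have hk : (k : ℝ) ≠ 0 := fun h => by simpa [h] using habs 1 hs
  have heq : |F (fun _ => 1) b| = |F (fun _ => -1) b| :=
    mul_left_cancel₀ hk ((habs 1 hs).trans (habs (-1) hf).symm)
  have hneg : F (fun _ => 1) b = -F (fun _ => -1) b :=
    (abs_eq_abs.1 heq).resolve_left fun h => hne (by rw [hconst 1 hs, hconst (-1) hf, h])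
  have hcont : Continuous fun t => F (staircase d β t) b :=
    (continuous_apply b).comp (hFcont.comp_continuous (continuous_staircase d β) hnorm)
  have hmem : (0 : ℝ) ∈ Set.uIcc (F (staircase d β 0) b) (F (staircase d β 4) b) := by
    rw [start, finish, hneg, Set.mem_uIcc]
    rcases le_total 0 (F (fun _ => -1) b) with h | h
    · exact .inl ⟨by linarith, h⟩
    · exact .inr ⟨h, by linarith⟩
  obtain ⟨t, -, ht⟩ := intermediate_value_uIcc hcont.continuousOn hmem
  exact ⟨t, ht⟩

/-- For `d ≥ 1`, `k ≥ 19^(2d-1) + 1`, and any step preserving continuous map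
`F` from the unit sphere of `ℓ∞^k` to the unit sphere of `ℓ1^k` with
`F(1,…,1) ≠ F(-1,…,-1)`, there are `x, y` on the sphere with `‖x - y‖_∞ ≤ 1/d` and
`‖F x - F y‖_1 ≥ 1/2`. -/
theorem stmt_1 (d : ℕ) (hd : 1 ≤ d) (k : ℕ) (hk : 19 ^ (2 * d - 1) + 1 ≤ k)
    (F : (Fin k → ℝ) → (Fin k → ℝ))
    (hFmaps : ∀ x, supNorm x = 1 → l1Norm (F x) = 1)
    (hFcont : ContinuousOn F {x | supNorm x = 1})
    (hstep : ∀ x, supNorm x = 1 → ∀ i j, x i = x j → F x i = F x j)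
    (hne : F (fun _ => (1 : ℝ)) ≠ F (fun _ => (-1 : ℝ))) :
    ∃ x y : Fin k → ℝ, supNorm x = 1 ∧ supNorm y = 1 ∧
      supNorm (x - y) ≤ 1 / (d : ℝ) ∧ 1 / 2 ≤ l1Norm (F x - F y) := by
  have hk' : 3 ^ (2 * d + 1) ≤ 2 * k + 1 := by
    have h₁ : 3 ^ (2 * d + 1) = 9 * 3 ^ (2 * d - 1) := by
      rw [show 2 * d + 1 = 2 * d - 1 + 2 by omega, pow_add]; ring
    have h₂ : 6 ^ (2 * d - 1) ≤ 19 ^ (2 * d - 1) := Nat.pow_le_pow_left (by norm_num) _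
    have h₃ : 19 ^ (2 * d - 1) = 19 * 19 ^ (2 * d - 2) := by
      rw [← pow_succ']; congr 1; omega
    have h₄ : 3 ^ (2 * d - 1) = 3 * 3 ^ (2 * d - 2) := by
      rw [← pow_succ']; congr 1; omega
    have h₅ : 3 ^ (2 * d - 2) ≤ 19 ^ (2 * d - 2) := Nat.pow_le_pow_left (by norm_num) _
    omega
  obtain ⟨β, hβ, h₀, ⟨b, hb⟩, hcard⟩ := exists_tripling_blocks hk'
  obtain ⟨t, ht⟩ := exists_staircase_apply_eq_zero hd hβ h₀ hb hFmaps hFcont hstep hne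
  have hx := supNorm_staircase hd h₀ ⟨b, hb⟩ t
  -- It suffices to find a rounding `γ` of `β` that merges heavy blocks with larger ones.
  have key : ∀ (J : Finset ℕ) (γ : ℕ → ℕ), (∀ j ∈ J, j + 1 ∉ J) → (∀ j ∈ J, j < 2 * d) →
      (∀ j, j ≤ γ j + 1 ∧ γ j ≤ j + 1) → γ 0 = 0 → γ (2 * d) = 2 * d →
      (∀ j ∈ J, γ j = γ (j + 1)) →
      1 / 2 ≤ ∑ i ∈ Finset.univ.filter (β · ∈ J), |F (staircase d β t) i| →
      ∃ x y : Fin k → ℝ, supNorm x = 1 ∧ supNorm y = 1 ∧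
        supNorm (x - y) ≤ 1 / (d : ℝ) ∧ 1 / 2 ≤ l1Norm (F x - F y) := by
    intro J γ hJ hJd hγ hγ₀ hγd hmerge hmass
    obtain ⟨a, ha⟩ := h₀
    have hy : supNorm (staircase d (γ ∘ β) t) = 1 :=
      supNorm_staircase hd ⟨a, by simp [ha, hγ₀]⟩ ⟨b, by simp [hb, hγd]⟩ t
    refine ⟨_, _, hx, hy, supNorm_staircase_sub_le (fun i => hγ (β i)) t,
      half_le_l1Norm_sub (hFmaps _ hx) (hFmaps _ hy) _ hmass
        (three_mul_sum_blocks_le β J hJ _ (fun i => abs_nonneg _)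
          (fun j hj => hcard j (hJd j hj)) fun j hj i i' hi hi' => ?_)⟩
    have hval : ∀ i, (β i = j ∨ β i = j + 1) → γ (β i) = γ j := by
      rintro i (h | h)
      · rw [h]
      · rw [h, hmerge j hj]
    rw [hstep _ hy i i' (by simp only [staircase, Function.comp, hval i hi, hval i' hi'])]
  let J : ℕ → Finset ℕ := fun r => (Finset.range (2 * d)).filter (· % 2 = r)
  have hJ : ∀ r j, j ∈ J r ↔ j < 2 * d ∧ j % 2 = r := fun r j => by simp [J]
  have total : 1 = ∑ i ∈ Finset.univ.filter (β · ∈ J 0), |F (staircase d β t) i| +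
      ∑ i ∈ Finset.univ.filter (β · ∈ J 1), |F (staircase d β t) i| := by
    rw [← hFmaps _ hx, l1Norm, ← Finset.sum_union]
    · refine (Finset.sum_subset (Finset.subset_univ _) fun i _ hi => ?_).symm
      have hi' : β i = β b := by
        simp only [Finset.mem_union, Finset.mem_filter, Finset.mem_univ, true_and, hJ] at hi
        have := hβ i
        omega
      rw [hstep _ hx i b (by simp only [staircase, hi']), ht, abs_zero]
    · refine Finset.disjoint_left.2 fun i h h' => ?_
      simp only [Finset.mem_filter, Finset.mem_univ, true_and, hJ] at h h'
      omega
  rcases le_or_gt (1 / 2) (∑ i ∈ Finset.univ.filter (β · ∈ J 0), |F (staircase d β t) i|) with h | h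
  · refine key (J 0) (fun j => 2 * (j / 2)) ?_ ?_ ?_ ?_ ?_ ?_ h <;> intros <;>
      simp only [hJ] at * <;> omega
  · refine key (J 1) (fun j => 2 * ((j + 1) / 2)) ?_ ?_ ?_ ?_ ?_ ?_ (by linarith) <;> intros <;>
      simp only [hJ] at * <;> omega
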